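/- Let q ∈ ℕ and 1 ≤ j ≤ q. Then there exists a constant C = C(j,q) such that for every K > 0, as r → ∞, ∑_{n ≥ j, n ≡ j (mod q)} (1/n)·(e^{−r/n} − 1) = −(1/q)·log r + C + O(r^{−K}); that is, the error is superpolynomially small in r. -/

import Mathlib

open scoped BigOperators

/-!
For `r > 0` the derivative of the series in `r` is `-r⁻² ∑ φ (n / r)`, where
`φ x = x⁻² e^{-1/x}` for `x > 0` and `φ x = 0` for `x ≤ 0`, i.e. `φ = deriv expNegInvGlue`.
All derivatives of this smooth function are integrable, so Poisson summation gives
`∑ φ (n / r) = (r / d) ∫ φ = r / d` up to a superpolynomially small error, the sum being over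
the whole progression of step `d`, whose nonpositive terms vanish. Integrating
`-r⁻² (r / d) = -(1 / d) r⁻¹` produces the logarithm, and the integrated error converges
superpolynomially fast to the constant.
-/

open Asymptotics Filter MeasureTheory Real
open scoped ContDiff FourierTransform Polynomial Topology

section Poisson

theorem pow_mul_norm_fourier_le {E : Type*} [NormedAddCommGroup E] [NormedSpace ℂ E]
    {f : ℝ → E} {n : ℕ} (hf : ContDiff ℝ n f)
    (hfi : ∀ k ≤ n, Integrable (iteratedDeriv k f)) (x : ℝ) :
    (2 * π * |x|) ^ n * ‖𝓕 f x‖ ≤ ∫ y, ‖iteratedDeriv n f y‖ := by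
  have hbound : ‖𝓕 (iteratedDeriv n f) x‖ ≤ ∫ y, ‖iteratedDeriv n f y‖ :=
    VectorFourier.norm_fourierIntegral_le_integral_norm _ _ _ _ _
  rw [Real.fourier_iteratedDeriv (N := n) (by exact_mod_cast hf)
    (fun k hk => hfi k (by exact_mod_cast hk)) le_rfl] at hbound
  simpa [norm_smul, abs_of_pos pi_pos] using hbound

theorem summable_one_div_two_pi_mul_abs_int_pow {n : ℕ} (hn : 2 ≤ n) :
    Summable fun k : ℤ => 1 / (2 * π * |(k : ℝ)|) ^ n := by
  simpa [mul_pow, abs_mul, mul_comm, abs_of_pos pi_pos] using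
    (Real.summable_one_div_int_pow.2 hn).abs.mul_left (1 / (2 * π) ^ n)

theorem norm_tsum_int_sub_integral_le {f : ℝ → ℂ} {n : ℕ} {b : ℝ} (hn : 2 ≤ n) (hb : 1 < b)
    (hf : ContDiff ℝ n f) (hfi : ∀ k ≤ n, Integrable (iteratedDeriv k f))
    (hfO : f =O[cocompact ℝ] fun x => |x| ^ (-b)) (t : ℝ) :
    ‖∑' m : ℤ, f (t + m) - ∫ x, f x‖ ≤
      (∫ x, ‖iteratedDeriv n f x‖) * ∑' k : ℤ, 1 / (2 * π * |(k : ℝ)|) ^ n := by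
  have hmajorant := (summable_one_div_two_pi_mul_abs_int_pow hn).mul_left
    (∫ x, ‖iteratedDeriv n f x‖)
  have hfourier_le : ∀ k : ℤ, k ≠ 0 →
      ‖𝓕 f k‖ ≤ (∫ x, ‖iteratedDeriv n f x‖) * (1 / (2 * π * |(k : ℝ)|) ^ n) := fun k hk => by
    have hpos : 0 < (2 * π * |(k : ℝ)|) ^ n :=
      pow_pos (mul_pos two_pi_pos (abs_pos.2 (Int.cast_ne_zero.2 hk))) n
    rw [mul_one_div, le_div_iff₀' hpos]
    exact pow_mul_norm_fourier_le hf hfi k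
  have hsummable : Summable fun k : ℤ => 𝓕 f k := by
    refine .of_norm_bounded_eventually hmajorant ?_
    filter_upwards [(Set.finite_singleton (0 : ℤ)).compl_mem_cofinite] with k hk
    exact hfourier_le k hk
  have hsummable' : Summable fun k : ℤ => 𝓕 f k * fourier k (t : UnitAddCircle) :=
    .of_norm <| by
      simpa only [norm_mul, fourier_apply, Circle.norm_coe, mul_one] using hsummable.norm
  have hzero : 𝓕 f 0 = ∫ x, f x := by simp [Real.fourier_real_eq_integral_exp_smul]
  rw [Real.tsum_eq_tsum_fourier_of_rpow_decay_of_summable hf.continuous hb hfO hsummable,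
    hsummable'.tsum_eq_add_tsum_ite 0, Int.cast_zero, fourier_zero, mul_one, hzero,
    add_sub_cancel_left, ← tsum_mul_left]
  refine tsum_of_norm_bounded hmajorant.hasSum fun k => ?_
  split_ifs with hk
  · simp only [norm_zero]
    positivity
  · simpa only [norm_mul, fourier_apply, Circle.norm_coe, mul_one] using hfourier_le k hk

theorem norm_tsum_int_comp_mul_sub_integral_le {f : ℝ → ℂ} {b : ℝ} (n : ℕ) (hb : 1 < b)
    (hf : ContDiff ℝ (n + 2 : ℕ) f) (hfi : ∀ k ≤ n + 2, Integrable (iteratedDeriv k f))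
    (hfO : f =O[cocompact ℝ] fun x => |x| ^ (-b)) {h : ℝ} (hh : 0 < h) (t : ℝ) :
    ‖∑' m : ℤ, f (h * (t + m)) - h⁻¹ • ∫ x, f x‖ ≤
      h ^ (n + 1) * ((∫ x, ‖iteratedDeriv (n + 2) f x‖) *
        ∑' k : ℤ, 1 / (2 * π * |(k : ℝ)|) ^ (n + 2)) := by
  have hderiv : ∀ k ≤ n + 2, iteratedDeriv k (fun x => f (h * x)) =
      fun x => h ^ k • iteratedDeriv k f (h * x) := fun k hk =>
    iteratedDeriv_comp_const_smul (hf.of_le (by exact_mod_cast hk)) h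
  have hint : ∀ k ≤ n + 2, Integrable (iteratedDeriv k fun x => f (h * x)) := fun k hk => by
    rw [hderiv k hk]
    exact ((hfi k hk).comp_mul_left' hh.ne').smul (h ^ k)
  have hdecay : (fun x => f (h * x)) =O[cocompact ℝ] fun x => |x| ^ (-b) := by
    have htendsto : Tendsto (h * ·) (cocompact ℝ) (cocompact ℝ) :=
      (Homeomorph.mulLeft₀ h hh.ne').isClosedEmbedding.tendsto_cocompact
    refine (hfO.comp_tendsto htendsto).trans (IsBigO.of_bound (h ^ (-b)) (.of_forall fun x => ?_))
    simp only [Function.comp_apply, abs_mul, abs_of_pos hh, mul_rpow hh.le (abs_nonneg x),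
      norm_mul, norm_of_nonneg (rpow_nonneg hh.le _), le_refl]
  have hnorm : ∫ x, ‖iteratedDeriv (n + 2) (fun x => f (h * x)) x‖ =
      h ^ (n + 1) * ∫ x, ‖iteratedDeriv (n + 2) f x‖ := by
    simp only [hderiv _ le_rfl, norm_smul, norm_pow, norm_of_nonneg hh.le, integral_const_mul,
      Measure.integral_comp_mul_left (fun x => ‖iteratedDeriv (n + 2) f x‖), abs_inv,
      abs_of_pos hh, smul_eq_mul]
    field_simp
    ring
  have hpoisson := norm_tsum_int_sub_integral_le (f := fun x => f (h * x)) (by lia) hb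
    (hf.comp (contDiff_const.mul contDiff_id)) hint hdecay t
  rwa [hnorm, mul_assoc, Measure.integral_comp_mul_left, abs_inv, abs_of_pos hh] at hpoisson

theorem iteratedDeriv_ofReal_comp {f : ℝ → ℝ} {n : ℕ} (hf : ContDiff ℝ n f) :
    iteratedDeriv n (fun x => (f x : ℂ)) = fun x => ((iteratedDeriv n f x : ℝ) : ℂ) := by
  ext x
  have hcomp := Complex.ofRealCLM.iteratedFDeriv_comp_left hf.contDiffAt le_rfl (x := x)
  exact DFunLike.congr_fun hcomp fun _ => 1

theorem superpolynomialDecay_tsum_int_sub_integral {f : ℝ → ℝ} {b : ℝ} (hb : 1 < b)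
    (hf : ContDiff ℝ ∞ f) (hfi : ∀ k, Integrable (iteratedDeriv k f))
    (hfO : f =O[cocompact ℝ] fun x => |x| ^ (-b)) (a : ℝ) {d : ℝ} (hd : 0 < d) :
    SuperpolynomialDecay atTop id
      (fun r => ∑' m : ℤ, f ((a + d * m) / r) - r / d * ∫ x, f x) := by
  rw [← superpolynomialDecay_param_mul_iff _ tendsto_id,
    superpolynomialDecay_iff_abs_isBoundedUnder _ tendsto_id]
  intro n
  have hf_nat : ∀ k : ℕ, ContDiff ℝ k f := contDiff_infty.1 hf
  obtain ⟨A, hA⟩ : ∃ A, ∀ h > 0, |∑' m : ℤ, f (h * (a / d + m)) - h⁻¹ * ∫ x, f x| ≤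
      h ^ (n + 1) * A := by
    have hint : ∀ k ≤ n + 2, Integrable (iteratedDeriv k fun x => (f x : ℂ)) := fun k _ => by
      rw [iteratedDeriv_ofReal_comp (hf_nat k)]
      exact (hfi k).ofReal
    refine ⟨(∫ x, ‖iteratedDeriv (n + 2) (fun x => (f x : ℂ)) x‖) *
      ∑' k : ℤ, 1 / (2 * π * |(k : ℝ)|) ^ (n + 2), fun h hh => ?_⟩
    have hbound := norm_tsum_int_comp_mul_sub_integral_le (f := fun x => (f x : ℂ)) n hb
      (Complex.ofRealCLM.contDiff.comp (hf_nat _)) hint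
      (Complex.isBigO_ofReal_left.2 hfO) hh (a / d)
    rwa [integral_complex_ofReal, ← Complex.ofReal_tsum, Complex.real_smul, ← Complex.ofReal_mul,
      ← Complex.ofReal_sub, Complex.norm_real] at hbound
  refine isBoundedUnder_of_eventually_le (a := d ^ (n + 1) * A) ?_
  filter_upwards [eventually_gt_atTop 0] with r hr
  have hscale : ∀ m : ℤ, d / r * (a / d + m) = (a + d * m) / r := fun m => by field_simp
  have hbound := hA (d / r) (by positivity)
  simp only [hscale, inv_div, div_pow] at hbound
  calc _ = r ^ (n + 1) * |∑' m : ℤ, f ((a + d * m) / r) - r / d * ∫ x, f x| := by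
        simp only [id, Pi.mul_apply]
        rw [← mul_assoc, ← pow_succ, abs_mul, abs_of_pos (by positivity)]
    _ ≤ r ^ (n + 1) * (d ^ (n + 1) / r ^ (n + 1) * A) := by gcongr
    _ = d ^ (n + 1) * A := by field_simp

end Poisson

theorem integrable_of_isBigO_norm_rpow_neg {E F : Type*} [NormedAddCommGroup E] [NormedSpace ℝ E]
    [FiniteDimensional ℝ E] [MeasurableSpace E] [BorelSpace E] {μ : Measure E} [μ.IsAddHaarMeasure]
    [NormedAddCommGroup F] {f : E → F} {b : ℝ} (hb : Module.finrank ℝ E < b)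
    (hf : LocallyIntegrable f μ) (hfO : f =O[cocompact E] fun x => ‖x‖ ^ (-b)) :
    Integrable f μ := by
  have hpow : (fun x : E => ‖x‖ ^ (-b)) =O[cocompact E] fun x => (1 + ‖x‖) ^ (-b) := by
    refine .of_bound (2 ^ b) ?_
    filter_upwards [(tendsto_norm_cocompact_atTop (E := E)).eventually_ge_atTop 1] with x hx
    have hb0 : 0 ≤ b := (Nat.cast_nonneg _).trans hb.le
    have hdouble : (1 + ‖x‖) ^ b ≤ 2 ^ b * ‖x‖ ^ b := by
      rw [← mul_rpow zero_le_two (norm_nonneg x)]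
      gcongr
      linarith
    rw [norm_of_nonneg (by positivity), norm_of_nonneg (by positivity), rpow_neg (by positivity),
      rpow_neg (by positivity), ← div_eq_mul_inv, le_div_iff₀ (by positivity),
      inv_mul_le_iff₀ (by positivity), mul_comm]
    exact hdouble
  exact hf.integrable_of_isBigO_cocompact (hfO.trans hpow)
    ((integrable_one_add_norm hb).integrableAtFilter _)

section ExpNegInvGlue

theorem expNegInvGlue_le_one (x : ℝ) : expNegInvGlue x ≤ 1 := by
  rcases le_or_gt x 0 with hx | hx
  · simp [expNegInvGlue.zero_of_nonpos hx]
  · simp [expNegInvGlue, hx.not_ge, hx.le]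

theorem tendsto_expNegInvGlue_atTop : Tendsto expNegInvGlue atTop (𝓝 1) := by
  have hexp : Tendsto (fun x : ℝ => exp (-x⁻¹)) atTop (𝓝 1) := by
    simpa using tendsto_inv_atTop_zero.neg.rexp
  refine hexp.congr' ?_
  filter_upwards [eventually_gt_atTop 0] with x hx
  simp [expNegInvGlue, hx.not_ge]

theorem tendsto_expNegInvGlue_atBot : Tendsto expNegInvGlue atBot (𝓝 0) := by
  refine tendsto_const_nhds.congr' ?_
  filter_upwards [eventually_le_atBot 0] with x hx
  exact (expNegInvGlue.zero_of_nonpos hx).symm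

theorem deriv_expNegInvGlue (x : ℝ) :
    deriv expNegInvGlue x = x⁻¹ ^ 2 * expNegInvGlue x := by
  simpa using (expNegInvGlue.hasDerivAt_polynomial_eval_inv_mul 1 x).deriv

theorem exists_iteratedDeriv_deriv_expNegInvGlue_eq (n : ℕ) :
    ∃ p : ℝ[X], iteratedDeriv n (deriv expNegInvGlue) =
      fun x => (Polynomial.X ^ 2 * p).eval x⁻¹ * expNegInvGlue x := by
  induction n with
  | zero => exact ⟨1, funext fun x => by simp [deriv_expNegInvGlue]⟩
  | succ n ih =>
    obtain ⟨p, hp⟩ := ih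
    rw [iteratedDeriv_succ, hp]
    exact ⟨_, funext fun x => (expNegInvGlue.hasDerivAt_polynomial_eval_inv_mul _ x).deriv⟩

theorem isBigO_polynomial_eval_inv_mul_expNegInvGlue (p : ℝ[X]) :
    (fun x => (Polynomial.X ^ 2 * p).eval x⁻¹ * expNegInvGlue x) =O[cocompact ℝ]
      fun x => |x| ^ (-2 : ℝ) := by
  have hp : (fun x => p.eval x⁻¹) =O[cocompact ℝ] fun _ => (1 : ℝ) := by
    rw [← Metric.cobounded_eq_cocompact]
    exact ((p.continuous.tendsto 0).comp tendsto_inv₀_cobounded).isBigO_one ℝ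
  have hglue : expNegInvGlue =O[cocompact ℝ] fun _ => (1 : ℝ) :=
    .of_bound 1 (.of_forall fun x => by
      simpa [abs_of_nonneg (expNegInvGlue.nonneg x)] using expNegInvGlue_le_one x)
  have hsq : (fun x : ℝ => x⁻¹ ^ 2) =O[cocompact ℝ] fun x => |x| ^ (-2 : ℝ) :=
    .of_bound 1 (.of_forall fun x => by simp)
  simpa using (hsq.mul hp).mul hglue

theorem integrable_iteratedDeriv_deriv_expNegInvGlue (n : ℕ) :
    Integrable (iteratedDeriv n (deriv expNegInvGlue)) := by
  obtain ⟨p, hp⟩ := exists_iteratedDeriv_deriv_expNegInvGlue_eq n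
  rw [hp]
  exact integrable_of_isBigO_norm_rpow_neg (b := 2) (by simp)
    (expNegInvGlue.continuous_polynomial_eval_inv_mul _).locallyIntegrable
    (isBigO_polynomial_eval_inv_mul_expNegInvGlue p)

theorem integral_deriv_expNegInvGlue : ∫ x, deriv expNegInvGlue x = 1 := by
  have hdiff : Differentiable ℝ expNegInvGlue :=
    (expNegInvGlue.contDiff (n := 1)).differentiable one_ne_zero
  have hint : Integrable (deriv expNegInvGlue) := by
    simpa using integrable_iteratedDeriv_deriv_expNegInvGlue 0
  simpa using integral_of_hasDerivAt_of_tendsto (fun x => (hdiff x).hasDerivAt) hint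
    tendsto_expNegInvGlue_atBot tendsto_expNegInvGlue_atTop

end ExpNegInvGlue

section Decay

theorem exists_tendsto_of_superpolynomialDecay_deriv {f : ℝ → ℝ}
    (hf : ∀ᶠ x in atTop, DifferentiableAt ℝ f x)
    (hf' : SuperpolynomialDecay atTop id (deriv f)) : ∃ c, Tendsto f atTop (𝓝 c) := by
  have hO : deriv f =O[atTop] fun x => x ^ (-2 : ℝ) := by
    simpa [← rpow_intCast] using (superpolynomialDecay_iff_isBigO _ tendsto_id).1 hf' (-2)
  obtain ⟨s, hs, hint⟩ := hO.integrableAtFilter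
    (stronglyMeasurable_deriv f).stronglyMeasurableAtFilter
    (integrableAtFilter_rpow_atTop_iff.2 (by norm_num))
  obtain ⟨a, ha⟩ := mem_atTop_sets.1 (inter_mem hs hf)
  exact ⟨_, tendsto_limUnder_of_hasDerivAt_of_integrableOn_Ioi
    (fun x hx => (ha x (le_of_lt hx)).2.hasDerivAt)
    (hint.mono_set fun x hx => (ha x (le_of_lt hx)).1)⟩

theorem exists_superpolynomialDecay_sub_const {f : ℝ → ℝ}
    (hf : ∀ᶠ x in atTop, DifferentiableAt ℝ f x)
    (hf' : SuperpolynomialDecay atTop id (deriv f)) :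
    ∃ c, SuperpolynomialDecay atTop id (fun x => f x - c) := by
  obtain ⟨c, hc⟩ := exists_tendsto_of_superpolynomialDecay_deriv hf hf'
  have hsub : Tendsto (fun x => f x - c) atTop (𝓝 0) := by simpa using hc.sub_const c
  refine ⟨c, (superpolynomialDecay_param_mul_iff _ tendsto_id).1 fun n => ?_⟩
  have hpow : Tendsto (fun x : ℝ => x ^ (-(n + 1 : ℤ))) atTop (𝓝 0) :=
    tendsto_zpow_atTop_zero (by lia)
  have hratio : Tendsto (fun x => (f x - c) / x ^ (-(n + 1 : ℤ))) atTop (𝓝 0) := by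
    refine deriv.lhopital_zero_atTop (hf.mono fun x hx => hx.sub_const c) ?_ hsub hpow ?_
    · filter_upwards [eventually_ne_atTop 0] with x hx
      rw [deriv_zpow]
      exact mul_ne_zero (by exact_mod_cast (by lia : -(n + 1 : ℤ) ≠ 0)) (zpow_ne_zero _ hx)
    · have hderiv := (hf' (n + 2)).const_mul (-(n + 1 : ℝ)⁻¹)
      rw [mul_zero] at hderiv
      refine hderiv.congr fun x => ?_
      have hexp : -(n + 1 : ℤ) - 1 = -(n + 2 : ℕ) := by push_cast; ring
      rw [deriv_zpow, deriv_sub_const_fun, hexp, zpow_neg, zpow_natCast]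
      push_cast
      simp only [id]
      field_simp
  refine hratio.congr fun x => ?_
  simp only [zpow_neg, div_inv_eq_mul, id, Pi.mul_apply]
  norm_cast
  ring

theorem exists_forall_abs_le_div_pow_of_superpolynomialDecay {f : ℝ → ℝ}
    (hf : SuperpolynomialDecay atTop id f) (n : ℕ) :
    ∃ C r₀ : ℝ, ∀ r, r₀ ≤ r → |f r| ≤ C / r ^ n := by
  have hsmall :=
    ((superpolynomialDecay_iff_abs_tendsto_zero _ _ _).1 hf n).eventually_le_const one_pos
  obtain ⟨r₀, hr₀⟩ := eventually_atTop.1 (hsmall.and (eventually_gt_atTop 0))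
  refine ⟨1, r₀, fun r hr => ?_⟩
  obtain ⟨hle, hpos⟩ := hr₀ r hr
  rw [le_div_iff₀' (by positivity)]
  simpa [abs_mul, abs_of_pos hpos] using hle

end Decay

section Series

theorem exp_neg_div_le_one {s ν : ℝ} (hs : 0 ≤ s) (hν : 0 ≤ ν) : exp (-s / ν) ≤ 1 :=
  exp_le_one_iff.2 (div_nonpos_of_nonpos_of_nonneg (neg_nonpos.2 hs) hν)

theorem summable_one_div_mul_exp_sub_one {ι : Type*} {ν : ι → ℝ} (hν : ∀ i, 0 < ν i)
    (hsummable : Summable fun i => 1 / ν i ^ 2) {r : ℝ} (hr : 0 ≤ r) :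
    Summable fun i => 1 / ν i * (exp (-r / ν i) - 1) := by
  refine .of_norm_bounded (hsummable.mul_left r) fun i => ?_
  have hpos := hν i
  have hlower : 1 - exp (-r / ν i) ≤ r / ν i := by
    have htangent := add_one_le_exp (-r / ν i)
    rw [neg_div] at htangent ⊢
    linarith
  calc _ = 1 / ν i * (1 - exp (-r / ν i)) := by
        rw [norm_mul, norm_of_nonneg (by positivity),
          norm_of_nonpos (sub_nonpos.2 (exp_neg_div_le_one hr hpos.le)), neg_sub]
    _ ≤ 1 / ν i * (r / ν i) := by gcongr
    _ = r * (1 / ν i ^ 2) := by ring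

theorem hasDerivAt_tsum_one_div_mul_exp_sub_one {ι : Type*} {ν : ι → ℝ} (hν : ∀ i, 0 < ν i)
    (hsummable : Summable fun i => 1 / ν i ^ 2) {r : ℝ} (hr : 0 < r) :
    HasDerivAt (fun r => ∑' i, 1 / ν i * (exp (-r / ν i) - 1))
      (-(1 / r ^ 2) * ∑' i, deriv expNegInvGlue (ν i / r)) r := by
  have hterm : ∀ i, ∀ s : ℝ, HasDerivAt (fun s => 1 / ν i * (exp (-s / ν i) - 1))
      (1 / ν i * (exp (-s / ν i) * (-1 / ν i))) s := fun i s =>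
    (((hasDerivAt_id s).neg.div_const _).exp.sub_const 1).const_mul _
  have hterm_le : ∀ i, ∀ s ∈ Set.Ioi (0 : ℝ),
      ‖1 / ν i * (exp (-s / ν i) * (-1 / ν i))‖ ≤ 1 / ν i ^ 2 := fun i s hs => by
    calc _ = exp (-s / ν i) * (1 / ν i ^ 2) := by
          rw [norm_mul, norm_mul, norm_div, norm_div, norm_neg, norm_one,
            norm_of_nonneg (hν i).le, norm_of_nonneg (exp_pos _).le]
          ring
      _ ≤ 1 / ν i ^ 2 :=
          mul_le_of_le_one_left (by positivity) (exp_neg_div_le_one (le_of_lt hs) (hν i).le)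
  have hterm_eq : ∀ i, 1 / ν i * (exp (-r / ν i) * (-1 / ν i)) =
      -(1 / r ^ 2) * deriv expNegInvGlue (ν i / r) := fun i => by
    have hpos := div_pos (hν i) hr
    have hne := (hν i).ne'
    rw [deriv_expNegInvGlue, expNegInvGlue, if_neg hpos.not_ge, inv_div, ← neg_div]
    field_simp
  rw [← tsum_mul_left]
  simpa only [hterm_eq] using hasDerivAt_tsum_of_isPreconnected hsummable isOpen_Ioi
    isPreconnected_Ioi (fun i s _ => hterm i s) hterm_le (Set.mem_Ioi.2 hr)
    (summable_one_div_mul_exp_sub_one hν hsummable hr.le) (Set.mem_Ioi.2 hr)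

theorem summable_one_div_add_mul_nat_sq (a : ℝ) {d : ℝ} (hd : d ≠ 0) :
    Summable fun m : ℕ => 1 / (a + d * m) ^ 2 := by
  have hshift := ((Real.summable_one_div_nat_add_rpow (a / d) 2).2 one_lt_two).mul_left (1 / d ^ 2)
  refine hshift.congr fun m => ?_
  rw [rpow_two, sq_abs, one_div_mul_one_div, ← mul_pow]
  field_simp
  ring

theorem tsum_int_add_mul_eq_tsum_nat {M : Type*} [AddCommMonoid M] [TopologicalSpace M]
    {f : ℝ → M} (hf : ∀ x ≤ 0, f x = 0) {a d : ℝ} (hd : 0 ≤ d) (had : a ≤ d) :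
    ∑' m : ℤ, f (a + d * m) = ∑' m : ℕ, f (a + d * m) := by
  refine (Nat.cast_injective.tsum_eq fun m hm => ?_).symm.trans (by simp)
  contrapose! hm
  have hneg : (m : ℝ) ≤ -1 := by
    rcases m with m | m
    · simp at hm
    · simp
  refine Function.notMem_support.2 (hf _ ?_)
  nlinarith

theorem superpolynomialDecay_tsum_nat_deriv_expNegInvGlue {a d : ℝ} (ha : 0 < a) (had : a ≤ d) :
    SuperpolynomialDecay atTop id
      (fun r => ∑' m : ℕ, deriv expNegInvGlue ((a + d * m) / r) - r / d) := by
  have hsmooth : ContDiff ℝ ∞ (deriv expNegInvGlue) :=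
    (contDiff_infty_iff_deriv.1 expNegInvGlue.contDiff).2
  have hdecay : deriv expNegInvGlue =O[cocompact ℝ] fun x => |x| ^ (-2 : ℝ) :=
    (isBigO_polynomial_eval_inv_mul_expNegInvGlue 1).congr_left fun x => by
      simp [deriv_expNegInvGlue]
  refine (superpolynomialDecay_tsum_int_sub_integral one_lt_two hsmooth
    integrable_iteratedDeriv_deriv_expNegInvGlue hdecay a (ha.trans_le had)).congr' ?_
  filter_upwards [eventually_gt_atTop 0] with r hr
  have hvanish : ∀ x ≤ 0, deriv expNegInvGlue (x / r) = 0 := fun x hx => by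
    rw [deriv_expNegInvGlue,
      expNegInvGlue.zero_of_nonpos (div_nonpos_of_nonpos_of_nonneg hx hr.le), mul_zero]
  rw [tsum_int_add_mul_eq_tsum_nat (f := fun x => deriv expNegInvGlue (x / r)) hvanish
    (ha.le.trans had) had, integral_deriv_expNegInvGlue, mul_one]

theorem sum_exp_log_superpolynomial_general {a d : ℝ} (ha : 0 < a) (had : a ≤ d) :
    ∃ C, SuperpolynomialDecay atTop id fun r =>
      ∑' m : ℕ, 1 / (a + d * m) * (exp (-r / (a + d * m)) - 1) - (-(1 / d) * log r + C) := by
  have hd : 0 < d := ha.trans_le had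
  have hderiv : ∀ r > 0, HasDerivAt
      (fun r => ∑' m : ℕ, 1 / (a + d * m) * (exp (-r / (a + d * m)) - 1) + 1 / d * log r)
      (-(1 / r ^ 2) * ∑' m : ℕ, deriv expNegInvGlue ((a + d * m) / r) + 1 / d * r⁻¹) r :=
    fun r hr => (hasDerivAt_tsum_one_div_mul_exp_sub_one (fun m => by positivity)
      (summable_one_div_add_mul_nat_sq a hd.ne') hr).add ((hasDerivAt_log hr.ne').const_mul _)
  have hdecay := (((superpolynomialDecay_tsum_nat_deriv_expNegInvGlue ha had).inv_param_mul
    tendsto_id).inv_param_mul tendsto_id).const_mul (-1)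
  obtain ⟨C, hC⟩ := exists_superpolynomialDecay_sub_const
    ((eventually_gt_atTop 0).mono fun r hr => (hderiv r hr).differentiableAt) <|
    hdecay.congr' <| by
      filter_upwards [eventually_gt_atTop 0] with r hr
      rw [(hderiv r hr).deriv]
      simp only [Pi.mul_apply, Pi.inv_apply, id]
      field_simp
      ring
  exact ⟨C, hC.congr fun r => by ring⟩

end Series

/-- **Superpolynomial summation estimate** (Lemma 4, case `s = 1`).  For `1 ≤ j ≤ q`
there is a constant `C` such that the sum over `n ≡ j (mod q)`, `n ≥ j`
(i.e. `n = j + q·m`) satisfies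
`∑ (1/n)(e^{-r/n} - 1) = -(1/q)·log r + C + O(r^{-K})` for every `K > 0` as `r → ∞`. -/
theorem sum_exp_log_superpolynomial (q j : ℕ) (hj : 1 ≤ j) (hjq : j ≤ q) :
    ∃ C : ℝ, ∀ K : ℕ, 0 < K → ∃ C₁ r₀ : ℝ, ∀ r : ℝ, r₀ ≤ r →
      |(∑' m : ℕ, (1 / ((j + q * m : ℕ) : ℝ)) *
            (Real.exp (-r / ((j + q * m : ℕ) : ℝ)) - 1)) -
          (-(1 / (q : ℝ)) * Real.log r + C)| ≤ C₁ / r ^ K := by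
  obtain ⟨C, hC⟩ := sum_exp_log_superpolynomial_general (a := j) (d := q)
    (by exact_mod_cast hj) (by exact_mod_cast hjq)
  refine ⟨C, fun K _ => ?_⟩
  push_cast
  exact exists_forall_abs_le_div_pow_of_superpolynomialDecay hC K
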